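/- Let μ^a, μ^b ∈ [0,1]^m with OptEnvy ≤ −Δ for some Δ > 0, let 1 ≤ q ≤ m, let S be a uniformly random subset of {1,…,m} of size q, and set Δ' = (1/2)·(q/m)·Δ. Then for every c > 0: P[ ∑_{i∈S} |c μ^a_i − μ^b_i| ≤ (1+c)Δ' ] ≤ exp(−(1/2)·q²Δ²/m³). -/

import Mathlib

open Real
open scoped Classical

noncomputable section

def envyAB {m : ℕ} (μa : Fin m → ℝ) (A : Finset (Fin m)) : ℝ :=
  ∑ i ∈ Aᶜ, μa i - ∑ i ∈ A, μa i

def envyBA {m : ℕ} (μb : Fin m → ℝ) (A : Finset (Fin m)) : ℝ :=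
  ∑ i ∈ A, μb i - ∑ i ∈ Aᶜ, μb i

def envy {m : ℕ} (μa μb : Fin m → ℝ) (A : Finset (Fin m)) : ℝ :=
  max (envyAB μa A) (envyBA μb A)

def optEnvy {m : ℕ} (μa μb : Fin m → ℝ) : ℝ :=
  ⨅ A : Finset (Fin m), envy μa μb A


def maclP {m : ℕ} (y : Fin m → ℝ) (q : ℕ) : ℝ :=
  ∑ S ∈ Finset.powersetCard q (Finset.univ : Finset (Fin m)), ∏ i ∈ S, y i

def maclK {m : ℕ} (y : Fin m → ℝ) (q : ℕ) (i j : Fin m) : ℝ :=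
  ∑ S ∈ (Finset.powersetCard q (Finset.univ : Finset (Fin m))).filter
    (fun S => i ∈ S ∧ j ∉ S), ∏ k ∈ S.erase i, y k

lemma maclK_nonneg {m : ℕ} (y : Fin m → ℝ) (hy : ∀ i, 0 ≤ y i) (q : ℕ) (i j : Fin m) :
    0 ≤ maclK y q i j :=
  Finset.sum_nonneg fun _ _ => Finset.prod_nonneg fun k _ => hy k

lemma maclK_symm {m : ℕ} (y : Fin m → ℝ) (q : ℕ) (i j : Fin m) :
    maclK y q i j = maclK y q j i := by
  unfold maclK
  have key : ∀ i j : Fin m, ∀ S ∈ (Finset.powersetCard q (Finset.univ : Finset (Fin m))).filter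
      (fun S => i ∈ S ∧ j ∉ S), insert j (S.erase i) ∈
      (Finset.powersetCard q (Finset.univ : Finset (Fin m))).filter
      (fun S => j ∈ S ∧ i ∉ S) ∧ (insert j (S.erase i)).erase j = S.erase i ∧
      insert i ((insert j (S.erase i)).erase j) = S := by
    intro i j S hS
    simp only [Finset.mem_filter, Finset.mem_powersetCard, Finset.subset_univ, true_and] at hS ⊢
    obtain ⟨hc, hi, hj⟩ := hS
    have hne : i ≠ j := fun h => hj (h ▸ hi)
    have hj' : j ∉ S.erase i := fun h => hj (Finset.mem_of_mem_erase h)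
    have h1 : (insert j (S.erase i)).erase j = S.erase i := Finset.erase_insert hj'
    refine ⟨⟨?_, Finset.mem_insert_self _ _, ?_⟩, h1, ?_⟩
    · rw [Finset.card_insert_of_notMem hj', Finset.card_erase_add_one hi, hc]
    · simp [hne]
    · rw [h1, Finset.insert_erase hi]
  refine Finset.sum_bij' (fun S _ => insert j (S.erase i)) (fun S _ => insert i (S.erase j))
    (fun S hS => (key i j S hS).1) (fun S hS => (key j i S hS).1)
    (fun S hS => (key i j S hS).2.2) (fun S hS => (key j i S hS).2.2) ?_
  intro S hS
  rw [(key i j S hS).2.1]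

lemma macl_pair {m : ℕ} (y : Fin m → ℝ) (q : ℕ) (i j : Fin m) :
    (∑ S ∈ (Finset.powersetCard q (Finset.univ : Finset (Fin m))).filter
    (fun S => i ∈ S ∧ j ∉ S), (∏ k ∈ S, y k) * (y j - y i)) =
    y i * (y j - y i) * maclK y q i j := by
  unfold maclK
  rw [Finset.mul_sum]
  refine Finset.sum_congr rfl fun S hS => ?_
  have hi : i ∈ S := (Finset.mem_filter.1 hS).2.1
  rw [← Finset.mul_prod_erase S y hi]
  ring

lemma macl_G {m : ℕ} (y : Fin m → ℝ) (hy : ∀ i, 0 ≤ y i) (q : ℕ) :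
    ∑ S ∈ Finset.powersetCard q (Finset.univ : Finset (Fin m)),
      (∏ k ∈ S, y k) * ∑ i ∈ S, ∑ j ∈ Sᶜ, (y j - y i) ≤ 0 := by
  have h1 : ∑ S ∈ Finset.powersetCard q (Finset.univ : Finset (Fin m)),
      (∏ k ∈ S, y k) * ∑ i ∈ S, ∑ j ∈ Sᶜ, (y j - y i)
      = ∑ i, ∑ j, y i * (y j - y i) * maclK y q i j := by
    simp_rw [← macl_pair, Finset.sum_filter]
    have : ∀ S : Finset (Fin m), (∏ k ∈ S, y k) * ∑ i ∈ S, ∑ j ∈ Sᶜ, (y j - y i)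
        = ∑ i, ∑ j, if i ∈ S ∧ j ∉ S then (∏ k ∈ S, y k) * (y j - y i) else 0 := by
      intro S
      rw [Finset.mul_sum, ← Finset.sum_filter_add_sum_filter_not Finset.univ (fun i => i ∈ S)]
      rw [Finset.sum_eq_zero (s := Finset.univ.filter (fun i => i ∉ S)), add_zero]
      · rw [Finset.filter_mem_eq_inter, Finset.univ_inter]
        refine Finset.sum_congr rfl fun i hi => ?_
        rw [Finset.mul_sum]
        simp only [hi, true_and]
        rw [← Finset.sum_filter]
        refine Finset.sum_congr ?_ fun _ _ => rfl
        ext; simp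
      · intro i hi
        have := (Finset.mem_filter.1 hi).2
        simp [this]
    simp_rw [this]
    rw [Finset.sum_comm]
    refine Finset.sum_congr rfl fun i _ => ?_
    rw [Finset.sum_comm]
  rw [h1]
  have h2 : ∑ i, ∑ j, y i * (y j - y i) * maclK y q i j
      = ∑ i, ∑ j, y j * (y i - y j) * maclK y q i j := by
    rw [Finset.sum_comm]
    refine Finset.sum_congr rfl fun i _ => Finset.sum_congr rfl fun j _ => ?_
    rw [maclK_symm]
  have h3 : ∑ i, ∑ j, y i * (y j - y i) * maclK y q i j
      + ∑ i, ∑ j, y j * (y i - y j) * maclK y q i j ≤ 0 := by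
    rw [← Finset.sum_add_distrib]
    refine Finset.sum_nonpos fun i _ => ?_
    rw [← Finset.sum_add_distrib]
    refine Finset.sum_nonpos fun j _ => ?_
    have := mul_nonneg (sq_nonneg (y i - y j)) (maclK_nonneg y hy q i j)
    nlinarith
  linarith

lemma macl_succ {m : ℕ} (y : Fin m → ℝ) (q : ℕ) :
    ((q : ℝ) + 1) * maclP y (q + 1) =
    ∑ S ∈ Finset.powersetCard q (Finset.univ : Finset (Fin m)),
      (∏ k ∈ S, y k) * ∑ j ∈ Sᶜ, y j := by
  unfold maclP
  rw [Finset.mul_sum]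
  have h1 : ∀ T ∈ Finset.powersetCard (q + 1) (Finset.univ : Finset (Fin m)),
      ((q : ℝ) + 1) * ∏ i ∈ T, y i = ∑ j ∈ T, ∏ i ∈ T, y i := by
    intro T hT
    rw [Finset.sum_const, (Finset.mem_powersetCard.1 hT).2]
    simp
  rw [Finset.sum_congr rfl h1]
  simp_rw [Finset.mul_sum]
  rw [Finset.sum_sigma', Finset.sum_sigma']
  refine Finset.sum_bij' (fun p _ => ⟨p.1.erase p.2, p.2⟩) (fun p _ => ⟨insert p.2 p.1, p.2⟩)
    ?_ ?_ ?_ ?_ ?_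
  · rintro ⟨T, j⟩ h
    simp only [Finset.mem_sigma, Finset.mem_powersetCard, Finset.subset_univ, true_and] at h ⊢
    refine ⟨?_, by simp⟩
    rw [Finset.card_erase_of_mem h.2, h.1]; rfl
  · rintro ⟨T, j⟩ h
    simp only [Finset.mem_sigma, Finset.mem_powersetCard, Finset.subset_univ, true_and,
      Finset.mem_compl] at h ⊢
    refine ⟨?_, by simp⟩
    rw [Finset.card_insert_of_notMem h.2, h.1]
  · rintro ⟨T, j⟩ h
    simp only [Finset.mem_sigma] at h
    simp [Finset.insert_erase h.2]
  · rintro ⟨T, j⟩ h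
    simp only [Finset.mem_sigma, Finset.mem_compl] at h
    simp [Finset.erase_insert h.2]
  · rintro ⟨T, j⟩ h
    simp only [Finset.mem_sigma] at h
    simp only
    rw [Finset.prod_erase_mul _ _ h.2]

lemma macl_step {m : ℕ} (y : Fin m → ℝ) (hy : ∀ i, 0 ≤ y i) (q : ℕ) :
    (m : ℝ) * (((q : ℝ) + 1) * maclP y (q + 1)) ≤ ((m : ℝ) - q) * (∑ i, y i) * maclP y q := by
  have hG := macl_G y hy q
  have h : ∀ S ∈ Finset.powersetCard q (Finset.univ : Finset (Fin m)),
      (∏ k ∈ S, y k) * ∑ i ∈ S, ∑ j ∈ Sᶜ, (y j - y i) =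
      m * ((∏ k ∈ S, y k) * ∑ j ∈ Sᶜ, y j) - ((m : ℝ) - q) * (∑ i, y i) * ∏ k ∈ S, y k := by
    intro S hS
    have hc := (Finset.mem_powersetCard.1 hS).2
    have hc2 : ((Sᶜ).card : ℝ) = m - q := by
      have := Finset.card_add_card_compl S
      rw [hc, Fintype.card_fin] at this
      rw [eq_sub_iff_add_eq]
      exact_mod_cast (by omega : (Sᶜ).card + q = m)
    have hs := Finset.sum_add_sum_compl S y
    have : ∑ i ∈ S, ∑ j ∈ Sᶜ, (y j - y i) = q * ∑ j ∈ Sᶜ, y j - (m - q) * ∑ i ∈ S, y i := by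
      simp only [Finset.sum_sub_distrib, Finset.sum_const, nsmul_eq_mul, hc, hc2,
        ← Finset.mul_sum]
    rw [this, ← hs]
    ring
  rw [Finset.sum_congr rfl h, Finset.sum_sub_distrib, ← Finset.mul_sum, ← Finset.mul_sum,
    ← macl_succ] at hG
  unfold maclP at *
  linarith

lemma macl {m : ℕ} (hm : 0 < m) (y : Fin m → ℝ) (hy : ∀ i, 0 ≤ y i) (q : ℕ) (hq : q ≤ m) :
    maclP y q ≤ m.choose q * ((∑ i, y i) / m) ^ q := by
  have hm' : (0 : ℝ) < m := by exact_mod_cast hm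
  induction q with
  | zero => simp [maclP]
  | succ q ih =>
    have ih := ih (by omega)
    have hs := macl_step y hy q
    have he : 0 ≤ ∑ i, y i := Finset.sum_nonneg fun i _ => hy i
    have hch : ((m.choose (q + 1) : ℕ) : ℝ) * ((q : ℝ) + 1) = m.choose q * ((m : ℝ) - q) := by
      have := congr_arg ((↑) : ℕ → ℝ) (Nat.choose_succ_right_eq m q)
      rw [Nat.cast_mul, Nat.cast_mul, Nat.cast_sub (by omega)] at this
      push_cast at this
      exact this
    have hmq : (0 : ℝ) ≤ (m : ℝ) - q := by
      rw [sub_nonneg]; exact_mod_cast (by omega : q ≤ m)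
    have h1 := mul_le_mul_of_nonneg_left ih (mul_nonneg hmq he)
    have h2 := hs.trans h1
    have hq1 : (0 : ℝ) < (q : ℝ) + 1 := by positivity
    have h3 : ((m : ℝ) * ((q : ℝ) + 1)) * maclP y (q + 1) ≤
        ((m : ℝ) * ((q : ℝ) + 1)) * (m.choose (q + 1) * ((∑ i, y i) / m) ^ (q + 1)) := by
      calc _ = (m : ℝ) * (((q : ℝ) + 1) * maclP y (q + 1)) := by ring
        _ ≤ _ := h2
        _ = (m.choose q * ((m : ℝ) - q)) * ((∑ i, y i) * ((∑ i, y i) / m) ^ q) := by ring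
        _ = (m.choose (q + 1) * ((q : ℝ) + 1)) * (m * ((∑ i, y i) / m) * ((∑ i, y i) / m) ^ q) := by
          rw [hch, mul_div_cancel₀ _ hm'.ne']
        _ = _ := by ring
    exact le_of_mul_le_mul_left h3 (by positivity)

lemma hoeff_mean {m : ℕ} (hm : 0 < m) (x : Fin m → ℝ) (hx : ∀ i, x i ∈ Set.Icc (0 : ℝ) 1)
    (s : ℝ) : (∑ i, Real.exp (-s * x i)) / m ≤
      Real.exp (-s * ((∑ i, x i) / m) + s ^ 2 / 8) := by
  haveI : Nonempty (Fin m) := ⟨⟨0, hm⟩⟩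
  have h := (ProbabilityTheory.hasSubgaussianMGF_of_mem_Icc
    (μ := (PMF.uniformOfFintype (Fin m)).toMeasure) (X := x) (a := 0) (b := 1)
    (measurable_of_finite x).aemeasurable (Filter.Eventually.of_forall hx)).mgf_le (-s)
  unfold ProbabilityTheory.mgf at h
  rw [PMF.integral_eq_sum, PMF.integral_eq_sum] at h
  simp only [PMF.uniformOfFintype_apply, Fintype.card_fin, smul_eq_mul, ENNReal.toReal_inv,
    ENNReal.toReal_natCast, ← Finset.mul_sum] at h
  have e : ∀ M : ℝ, ∑ i, Real.exp (-s * (x i - M)) =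
      Real.exp (s * M) * ∑ i, Real.exp (-s * x i) := by
    intro M
    rw [Finset.mul_sum]
    refine Finset.sum_congr rfl fun i _ => ?_
    rw [← Real.exp_add]; congr 1; ring
  rw [e] at h
  have h2 := mul_le_mul_of_nonneg_left h
    (Real.exp_pos (-(s * ((m : ℝ)⁻¹ * ∑ i, x i)))).le
  rw [← Real.exp_add] at h2
  calc _ = Real.exp (-(s * ((m : ℝ)⁻¹ * ∑ i, x i))) * ((m : ℝ)⁻¹ *
        (Real.exp (s * ((m : ℝ)⁻¹ * ∑ i, x i)) * ∑ i, Real.exp (-s * x i))) := by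
        rw [Real.exp_neg]
        field_simp
    _ ≤ _ := h2
    _ = _ := by
      congr 1
      norm_num
      ring

lemma opt_sum {m : ℕ} (μa μb : Fin m → ℝ) (Δ : ℝ) (hopt : optEnvy μa μb ≤ -Δ)
    (c : ℝ) (hc : 0 < c) : (1 + c) * Δ ≤ ∑ i, |c * μa i - μb i| := by
  obtain ⟨A, hA⟩ := exists_eq_ciInf_of_finite (f := fun A : Finset (Fin m) => envy μa μb A)
  have hE : envy μa μb A ≤ -Δ := hA.trans_le hopt
  have h1 := (le_max_left _ _).trans hE
  have h2 := (le_max_right _ _).trans hE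
  unfold envyAB at h1
  unfold envyBA at h2
  rw [← Finset.sum_add_sum_compl A]
  have h3 : ∑ i ∈ A, (c * μa i - μb i) ≤ ∑ i ∈ A, |c * μa i - μb i| :=
    Finset.sum_le_sum fun i _ => le_abs_self _
  have h4 : ∑ i ∈ Aᶜ, -(c * μa i - μb i) ≤ ∑ i ∈ Aᶜ, |c * μa i - μb i| :=
    Finset.sum_le_sum fun i _ => neg_le_abs _
  simp only [Finset.sum_neg_distrib, Finset.sum_sub_distrib, ← Finset.mul_sum] at h3 h4
  nlinarith

/-- if `OptEnvy ≤ -Δ` and `S` is a uniformly random subset of `{1,…,m}` of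
size `q` (all `C(m,q)` subsets equally likely), then with `Δ' = (1/2)(q/m)Δ`,
`P[∑_{i∈S} |c μ^a_i − μ^b_i| ≤ (1+c)Δ'] ≤ exp(−(1/2) q²Δ²/m³)` for every `c > 0`. -/
theorem stmt17 {m : ℕ} (μa μb : Fin m → ℝ)
    (hμa : ∀ i, μa i ∈ Set.Icc (0 : ℝ) 1) (hμb : ∀ i, μb i ∈ Set.Icc (0 : ℝ) 1)
    (Δ : ℝ) (hΔ : 0 < Δ) (hopt : optEnvy μa μb ≤ -Δ)
    (q : ℕ) (hq1 : 1 ≤ q) (hq2 : q ≤ m) (c : ℝ) (hc : 0 < c) :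
    (((Finset.powersetCard q (Finset.univ : Finset (Fin m))).filter fun S =>
          ∑ i ∈ S, |c * μa i - μb i| ≤ (1 + c) * (1 / 2 * ((q : ℝ) / m) * Δ)).card : ℝ) /
        (m.choose q : ℝ) ≤
      Real.exp (-(1 / 2) * q ^ 2 * Δ ^ 2 / m ^ 3) := by
  have hm : 0 < m := by omega
  have hm' : (0 : ℝ) < m := by exact_mod_cast hm
  have hc1 : 0 < 1 + c := by linarith
  set δ : ℝ := Δ / m with hδ
  have hδ0 : 0 < δ := div_pos hΔ hm'
  set x : Fin m → ℝ := fun i => |c * μa i - μb i| / (1 + c) with hxdef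
  have hx : ∀ i, x i ∈ Set.Icc (0 : ℝ) 1 := by
    intro i
    obtain ⟨a0, a1⟩ := hμa i
    obtain ⟨b0, b1⟩ := hμb i
    refine ⟨by positivity, ?_⟩
    rw [div_le_one hc1, abs_le]
    constructor <;> nlinarith
  have hmean : δ ≤ (∑ i, x i) / m := by
    rw [hδ]
    gcongr
    rw [hxdef, ← Finset.sum_div, le_div_iff₀ hc1, mul_comm]
    exact opt_sum μa μb Δ hopt c hc
  set y : Fin m → ℝ := fun i => Real.exp (-(2 * δ) * x i) with hydef
  have hy0 : ∀ i, 0 ≤ y i := fun i => (Real.exp_pos _).le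
  have hy : (∑ i, y i) / m ≤ Real.exp (-(3 / 2) * δ ^ 2) := by
    refine (hoeff_mean hm x hx (2 * δ)).trans ?_
    rw [Real.exp_le_exp]
    nlinarith
  have hP := macl hm y hy0 q hq2
  have hch : (0 : ℝ) < m.choose q := by exact_mod_cast Nat.choose_pos hq2
  set F := (Finset.powersetCard q (Finset.univ : Finset (Fin m))).filter fun S =>
          ∑ i ∈ S, |c * μa i - μb i| ≤ (1 + c) * (1 / 2 * ((q : ℝ) / m) * Δ) with hF
  have hcount : (F.card : ℝ) * Real.exp (-(q * δ ^ 2)) ≤ maclP y q := by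
    calc (F.card : ℝ) * Real.exp (-(q * δ ^ 2)) = ∑ S ∈ F, Real.exp (-(q * δ ^ 2)) := by simp
      _ ≤ ∑ S ∈ F, ∏ i ∈ S, y i := by
        refine Finset.sum_le_sum fun S hS => ?_
        have hS2 := (Finset.mem_filter.1 hS).2
        rw [hydef, ← Real.exp_sum, Real.exp_le_exp, ← Finset.mul_sum]
        have : ∑ i ∈ S, x i ≤ q * δ / 2 := by
          rw [hxdef, ← Finset.sum_div, div_le_iff₀ hc1]
          refine hS2.trans (le_of_eq ?_)
          rw [hδ]; ring
        nlinarith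
      _ ≤ _ := Finset.sum_le_sum_of_subset_of_nonneg (Finset.filter_subset _ _)
          fun S _ _ => Finset.prod_nonneg fun i _ => hy0 i
  have hpow : ((∑ i, y i) / m) ^ q ≤ Real.exp (q * (-(3 / 2) * δ ^ 2)) := by
    rw [Real.exp_nat_mul]
    exact pow_le_pow_left₀ (div_nonneg (Finset.sum_nonneg fun i _ => hy0 i) hm'.le) hy q
  have hall : (F.card : ℝ) * Real.exp (-(q * δ ^ 2)) ≤
      m.choose q * Real.exp (q * (-(3 / 2) * δ ^ 2)) :=
    (hcount.trans hP).trans (mul_le_mul_of_nonneg_left hpow hch.le)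
  have hfin : (F.card : ℝ) / m.choose q ≤ Real.exp (-(1 / 2) * (q * δ ^ 2)) := by
    rw [div_le_iff₀ hch]
    refine le_of_mul_le_mul_right (hall.trans (le_of_eq ?_)) (Real.exp_pos (-(q * δ ^ 2)))
    rw [mul_comm (Real.exp _) (m.choose q : ℝ), mul_assoc, ← Real.exp_add]
    congr 2; ring
  refine hfin.trans ?_
  rw [Real.exp_le_exp]
  have hqm : (q : ℝ) / m ≤ 1 := by
    rw [div_le_one hm']; exact_mod_cast hq2
  have e : -(1 / 2) * (q : ℝ) ^ 2 * Δ ^ 2 / m ^ 3 = -(1 / 2) * (q * δ ^ 2) * (q / m) := by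
    rw [hδ]; field_simp
  rw [e]
  have : 0 ≤ (q : ℝ) * δ ^ 2 := by positivity
  nlinarith
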